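/- Convergence of the ergodic goodput as the feedback delay tends to infinity: with the notation below, if λ < 1 and the Markov convergence bound holds for every delay D, then the ergodic goodput gain Δρ(D) tends to 0 as D → ∞; equivalently, r·ρ1(D) + (1−r)·ρ2(D) converges to ρ∞ = Σ_{k1D,k10,k2D,k20} C(k1D,k10,k2D,k20)·π⁴. -/

import Mathlib

/-!
The goodputs `ρ1`, `ρ2` and `ρ∞` are values of one bilinear form `G` in two transition matrices:
`ρ1 = G(P^D, P^D)`, `ρ2 = G(P^D, U)` and `ρ∞ = G(U, U)`, where every row of `U` is `π`. Hence the
gain is a continuous function of `P^D` that vanishes at `U`, and the Markov convergence bound gives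
`P^D → U`.
-/

open Filter Topology

theorem tendsto_zero_of_sq_le_mul_pow {x : ℕ → ℝ} {c q : ℝ} (hq : |q| < 1)
    (hx : ∀ n, x n ^ 2 ≤ c * q ^ n) : Tendsto x atTop (𝓝 0) := by
  have hbound : Tendsto (fun n ↦ √(c * q ^ n)) atTop (𝓝 0) := by
    simpa using ((tendsto_pow_atTop_nhds_zero_of_abs_lt_one hq).const_mul c).sqrt
  exact squeeze_zero_norm (fun n ↦ Real.abs_le_sqrt (hx n)) hbound

theorem tendsto_pi_of_tendsto_sum_norm_sub {α ι : Type*} [Fintype ι] {E : ι → Type*}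
    [∀ i, SeminormedAddCommGroup (E i)] {l : Filter α} {f : α → ∀ i, E i} {g : ∀ i, E i}
    (h : Tendsto (fun a ↦ ∑ i, ‖f a i - g i‖) l (𝓝 0)) : Tendsto f l (𝓝 g) := by
  refine tendsto_pi_nhds.2 fun i ↦ tendsto_iff_norm_sub_tendsto_zero.2 ?_
  exact squeeze_zero (fun a ↦ norm_nonneg _)
    (fun a ↦ Finset.single_le_sum (f := fun j ↦ ‖f a j - g j‖)
      (fun _ _ ↦ norm_nonneg _) (Finset.mem_univ i)) h

section Goodput

variable {ι : Type*} [Fintype ι]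

theorem tendsto_replicateRow_of_sq_sum_abs_sub_le {Q : ℕ → Matrix ι ι ℝ} {π : ι → ℝ} {c q : ℝ}
    (hq : |q| < 1) (hQ : ∀ n l, (∑ m, |Q n l m - π m|) ^ 2 ≤ c * q ^ n) :
    Tendsto Q atTop (𝓝 (Matrix.replicateRow ι π)) :=
  tendsto_pi_nhds.2 fun l ↦ tendsto_pi_of_tendsto_sum_norm_sub
    (tendsto_zero_of_sq_le_mul_pow hq (hQ · l))

/-- The average of the weights `C(k1D, k10, k2D, k20)` when the delayed states `k1D` and `k2D` are
drawn independently from `π` and the current states `k10` and `k20` are reached from them by the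
transition matrices `Q` and `R`. -/
def averageGoodput (C : ι × ι × ι × ι → ℝ) (π : ι → ℝ) (Q R : Matrix ι ι ℝ) : ℝ :=
  ∑ k1D, ∑ k10, ∑ k2D, ∑ k20, C (k1D, k10, k2D, k20) * Q k1D k10 * R k2D k20 * (π k1D * π k2D)

/-- The ergodic goodput gain `r ρ1 + (1 - r) ρ2 - ρ∞` when the delayed channel states evolve by
the transition matrix `Q`; a state independent of the delayed one is encoded by the transition
matrix all of whose rows are `π`. -/
def goodputGain (C : ι × ι × ι × ι → ℝ) (π : ι → ℝ) (r : ℝ) (Q : Matrix ι ι ℝ) : ℝ :=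
  r * averageGoodput C π Q Q + (1 - r) * averageGoodput C π Q (Matrix.replicateRow ι π)
    - averageGoodput C π (Matrix.replicateRow ι π) (Matrix.replicateRow ι π)

variable (C : ι × ι × ι × ι → ℝ) (π : ι → ℝ) (r : ℝ)

theorem continuous_averageGoodput {X : Type*} [TopologicalSpace X] {Q R : X → Matrix ι ι ℝ}
    (hQ : Continuous Q) (hR : Continuous R) :
    Continuous fun x ↦ averageGoodput C π (Q x) (R x) := by
  have hQ_elem (i j : ι) : Continuous fun x ↦ Q x i j := hQ.matrix_elem i j
  have hR_elem (i j : ι) : Continuous fun x ↦ R x i j := hR.matrix_elem i j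
  unfold averageGoodput
  fun_prop

theorem continuous_goodputGain : Continuous (goodputGain C π r) := by
  have hdelayed : Continuous fun Q ↦ averageGoodput C π Q Q :=
    continuous_averageGoodput C π continuous_id continuous_id
  have hmixed : Continuous fun Q ↦ averageGoodput C π Q (Matrix.replicateRow ι π) :=
    continuous_averageGoodput C π continuous_id continuous_const
  exact ((hdelayed.const_mul r).add (hmixed.const_mul (1 - r))).sub continuous_const

theorem goodputGain_replicateRow : goodputGain C π r (Matrix.replicateRow ι π) = 0 := by
  unfold goodputGain
  ring

theorem goodput_gain_tendsto_zero_general [DecidableEq ι] {P : Matrix ι ι ℝ} {c lam : ℝ}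
    (hlam : |lam| < 1) (hconv : ∀ D l, (∑ m, |(P ^ D) l m - π m|) ^ 2 ≤ c * lam ^ D) :
    Tendsto (fun D : ℕ ↦ goodputGain C π r (P ^ D)) atTop (𝓝 0) := by
  rw [← goodputGain_replicateRow C π r]
  exact ((continuous_goodputGain C π r).tendsto _).comp
    (tendsto_replicateRow_of_sq_sum_abs_sub_le hlam hconv)

end Goodput

/-- Convergence of the ergodic goodput as the feedback delay tends to infinity:
if `λ < 1` and the Markov convergence bound `(Σ_m |(P^D)_{lm} − 1/N|)² ≤ N·λ^D`
holds for every delay `D`, then the ergodic goodput gain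
`Δρ(D) = r·ρ1(D) + (1−r)·ρ2(D) − ρ∞` tends to `0` as `D → ∞`,
where `π = 1/N` and `P` is row stochastic. -/
theorem goodput_gain_tendsto_zero (N : ℕ) [NeZero N]
    (P : Matrix (Fin N) (Fin N) ℝ)
    (hP0 : ∀ l m, 0 ≤ P l m) (hP1 : ∀ l, ∑ m, P l m = 1)
    (lam : ℝ) (hlam0 : 0 ≤ lam) (hlam1 : lam < 1)
    (hconv : ∀ (D : ℕ) (l : Fin N),
      (∑ m, |(P ^ D) l m - 1 / (N : ℝ)|) ^ 2 ≤ (N : ℝ) * lam ^ D)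
    (r : ℝ) (hr0 : 0 ≤ r) (hr1 : r ≤ 1)
    (C : Fin N × Fin N × Fin N × Fin N → ℝ) (hC : ∀ x, 0 ≤ C x) :
    Filter.Tendsto (fun D : ℕ =>
        r * (∑ k1D : Fin N, ∑ k10 : Fin N, ∑ k2D : Fin N, ∑ k20 : Fin N,
              C (k1D, k10, k2D, k20) * (P ^ D) k1D k10 * (P ^ D) k2D k20
                * (1 / (N : ℝ)) ^ 2)
          + (1 - r) * (∑ k1D : Fin N, ∑ k10 : Fin N, ∑ k2D : Fin N, ∑ k20 : Fin N,
              C (k1D, k10, k2D, k20) * (P ^ D) k1D k10 * (1 / (N : ℝ)) ^ 3)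
          - (∑ k1D : Fin N, ∑ k10 : Fin N, ∑ k2D : Fin N, ∑ k20 : Fin N,
              C (k1D, k10, k2D, k20) * (1 / (N : ℝ)) ^ 4))
      Filter.atTop (nhds 0) := by
  simpa [goodputGain, averageGoodput, pow_succ, mul_assoc] using
    goodput_gain_tendsto_zero_general C (fun _ ↦ 1 / (N : ℝ)) r
      (abs_lt.2 ⟨by linarith, hlam1⟩) hconv
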